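/- arXiv:1112.3921 — 9 statements merged into one kernel-verified Lean document; each statement's English description precedes it below -/
import Mathlib

section
/- For every i : Fin n, the determinant of the (n−1)×(n−1) matrix X_i(R), obtained from the generic matrix X(R) by deleting row i, is nonzero in MvPolynomial (Fin n × Fin (n−1)) ℚ if and only if there exists a bijection e from {j : Fin n // j ≠ i} to Fin (n−1) such that R j (e j) holds for every j ≠ i. -/
/-!
If the determinant is nonzero, so is some term of its Leibniz expansion, and the permutation
indexing that term only meets nonzero entries, hence gives the bijection. Conversely, a bijection
`e` compatible with `R` gives a permutation `f` of `Fin n` (through `Fin.succAbove i`);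
specialising `x_{i.succAbove k, f k}` to `1` and all other variables to `0` turns `X_i(R)` into
the permutation matrix of `f`, whose determinant is `± 1`. Distinct entries being distinct
variables is what makes this specialisation possible.
-/

open scoped Classical

/-- The generic `(n+1) × n` matrix of the nonzero pattern `R`: its `(i,j)` entry is the
polynomial variable `x_{i,j}` if `R i j` holds and `0` otherwise. -/
noncomputable def genericMatrix (n : ℕ) (R : Fin (n + 1) → Fin n → Prop) :
    Matrix (Fin (n + 1)) (Fin n) (MvPolynomial (Fin (n + 1) × Fin n) ℚ) :=
  Matrix.of fun i j => if R i j then MvPolynomial.X (i, j) else 0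

/-- The `n × n` matrix `X_i(R)` obtained from the generic matrix `X(R)` by deleting row `i`. -/
noncomputable def genericMatrixDel (n : ℕ) (R : Fin (n + 1) → Fin n → Prop) (i : Fin (n + 1)) :
    Matrix (Fin n) (Fin n) (MvPolynomial (Fin (n + 1) × Fin n) ℚ) :=
  (genericMatrix n R).submatrix i.succAbove id

/-- For every `i`, `det X_i(R) ≠ 0` iff there is a bijection `e` from the rows different from `i`
to the columns such that `R j (e j)` holds for every row `j ≠ i`. -/
theorem det_genericMatrixDel_ne_zero_iff (n : ℕ) (hn : 1 ≤ n)
    (R : Fin (n + 1) → Fin n → Prop) (i : Fin (n + 1)) :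
    (genericMatrixDel n R i).det ≠ 0 ↔
      ∃ e : {j : Fin (n + 1) // j ≠ i} ≃ Fin n,
        ∀ j : {j : Fin (n + 1) // j ≠ i}, R j.1 (e j) := by
  constructor
  · intro h
    rw [Matrix.det_apply] at h
    obtain ⟨σ, -, hσ⟩ := Finset.exists_ne_zero_of_sum_ne_zero h
    have hR : ∀ k, R (i.succAbove (σ k)) k := by
      intro k
      by_contra hk
      apply hσ
      rw [Finset.prod_eq_zero (Finset.mem_univ k), smul_zero]
      simp [genericMatrixDel, genericMatrix, hk]
    refine ⟨(finSuccAboveEquiv i).symm.trans σ.symm, fun j => ?_⟩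
    obtain ⟨k, rfl⟩ := (finSuccAboveEquiv i).surjective j
    have hk := hR (σ.symm k)
    rw [Equiv.apply_symm_apply] at hk
    rw [Equiv.trans_apply, Equiv.symm_apply_apply]
    exact hk
  · rintro ⟨e, he⟩ h
    let f : Equiv.Perm (Fin n) := (finSuccAboveEquiv i).trans e
    have hf : ∀ k, R (i.succAbove k) (f k) := fun k => he (finSuccAboveEquiv i k)
    let φ : MvPolynomial (Fin (n + 1) × Fin n) ℚ →+* ℚ :=
      MvPolynomial.eval fun p => if ∃ k, i.succAbove k = p.1 ∧ f k = p.2 then 1 else 0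
    have hM : φ.mapMatrix (genericMatrixDel n R i) = f.permMatrix ℚ := by
      ext k l
      by_cases hl : f k = l
      · have hkl : R (i.succAbove k) l := hl ▸ hf k
        simp [φ, genericMatrixDel, genericMatrix, hl, hkl, PEquiv.toMatrix_apply]
      · by_cases hkl : R (i.succAbove k) l <;>
          simp [φ, genericMatrixDel, genericMatrix, hl, hkl, PEquiv.toMatrix_apply]
    have hdet := congrArg φ h
    rw [RingHom.map_det, hM, Matrix.det_permutation, map_zero] at hdet
    rcases Int.units_eq_one_or (Equiv.Perm.sign f) with hs | hs <;> simp [hs] at hdet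
end

section
/- If R is super essential then R is irredundant: for every nonempty proper subset T ⊊ Fin n of rows, the number of columns j : Fin (n−1) such that R i j holds for some i ∈ T is at least the cardinality of T. -/
open scoped Classical

/-- `R` is super essential: for every row `i` there is a bijection `e` from the rows
different from `i` to the columns with `R j (e j)` for every `j ≠ i`. -/
def SuperEssential (n : ℕ) (R : Fin (n + 1) → Fin n → Prop) : Prop :=
  ∀ i : Fin (n + 1), ∃ e : {j : Fin (n + 1) // j ≠ i} ≃ Fin n,
    ∀ j : {j : Fin (n + 1) // j ≠ i}, R j.1 (e j)

/-- If `R` is super essential then `R` is irredundant: every nonempty proper subset `T` of the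
rows touches at least `|T|` columns. -/
theorem superEssential_irredundant (n : ℕ) (hn : 1 ≤ n) (R : Fin (n + 1) → Fin n → Prop)
    (h : SuperEssential n R) :
    ∀ T : Finset (Fin (n + 1)), T.Nonempty → T ≠ Finset.univ →
      T.card ≤ (Finset.univ.filter fun j : Fin n => ∃ i ∈ T, R i j).card := by
  intro T _ hT
  obtain ⟨a, ha⟩ : ∃ a, a ∉ T := by
    simpa [Finset.eq_univ_iff_forall] using hT
  -- Deleting a row `a` outside `T` keeps all of `T`, so the bijection for `a` embeds `T` into
  -- the columns that `T` touches.
  obtain ⟨e, he⟩ := h a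
  have hne : ∀ i ∈ T, i ≠ a := fun i hi hia => ha (hia ▸ hi)
  rw [← Finset.card_attach]
  refine Finset.card_le_card_of_injOn (fun i => e ⟨i.1, hne i.1 i.2⟩) ?_ ?_
  · intro i _
    exact Finset.mem_coe.2 (Finset.mem_filter.2
      ⟨Finset.mem_univ _, i.1, i.2, he ⟨i.1, hne i.1 i.2⟩⟩)
  · intro i _ j _ hij
    exact Subtype.ext (Subtype.mk.inj (e.injective hij))
end

section
/- Assume every row of R is nonzero, i.e. for every i : Fin n there exists j : Fin (n−1) with R i j. Then R possesses a super essential subsystem T ⊆ Fin n; moreover, if R itself is not super essential, then every such T (in particular the one that exists) is a proper subset of Fin n. -/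
/-!
Write `N S` for the set of columns met by a set `S` of rows. The set of all rows is deficient,
`|N univ| ≤ n < n + 1`, so there is an inclusion-minimal `T` with `|N T| < |T|`. By minimality every
proper subset `S` of `T` satisfies Hall's condition `|S| ≤ |N S|`. Hence for each `t ∈ T` Hall's
marriage theorem matches `T \ {t}` injectively into `N T`, and `|T| - 1 ≤ |N T| < |T|` makes the
matching a bijection.

If the whole set of rows is a super essential subsystem, then `|N univ| = n`, so `N univ` consists
of all columns and the bijections given are those in the definition of super essentiality.
-/

open scoped Classical

/-- A nonempty finset `T` of rows is a super essential subsystem of `R` if, with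
`J := {j | ∃ i ∈ T, R i j}`, one has `|J| = |T| - 1` and for every `t ∈ T` there is a
bijection `e : T \ {t} ≃ J` with `R i (e i)` for all `i ∈ T \ {t}`. -/
def SuperEssentialSubsystem (n : ℕ) (R : Fin (n + 1) → Fin n → Prop)
    (T : Finset (Fin (n + 1))) : Prop :=
  T.Nonempty ∧
    (Finset.univ.filter fun j : Fin n => ∃ i ∈ T, R i j).card = T.card - 1 ∧
    ∀ t ∈ T, ∃ e : {i : Fin (n + 1) // i ∈ T.erase t} ≃
        {j : Fin n // j ∈ Finset.univ.filter fun j : Fin n => ∃ i ∈ T, R i j},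
      ∀ i : {i : Fin (n + 1) // i ∈ T.erase t}, R i.1 (e i).1

/-- The set of columns in which some row of `S` is nonzero. -/
noncomputable def columnSupport (n : ℕ) (R : Fin (n + 1) → Fin n → Prop) (S : Finset (Fin (n + 1))) :
    Finset (Fin n) :=
  Finset.univ.filter fun j : Fin n => ∃ i ∈ S, R i j

lemma mem_columnSupport {n : ℕ} {R : Fin (n + 1) → Fin n → Prop} {S : Finset (Fin (n + 1))}
    {j : Fin n} : j ∈ columnSupport n R S ↔ ∃ i ∈ S, R i j := by
  simp [columnSupport]

/-- Hall's marriage theorem for a set `S` of rows, all of whose subsets satisfy Hall's condition. -/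
lemma exists_matching {n : ℕ} {R : Fin (n + 1) → Fin n → Prop} {S : Finset (Fin (n + 1))}
    (hS : ∀ U ⊆ S, U.card ≤ (columnSupport n R U).card) :
    ∃ f : {i // i ∈ S} → Fin n, Function.Injective f ∧ ∀ i, R i.1 (f i) := by
  have hall := (Finset.all_card_le_biUnion_card_iff_exists_injective
    (fun i : {i // i ∈ S} => Finset.univ.filter fun j : Fin n => R i.1 j)).1 ?_
  · obtain ⟨f, hf, h⟩ := hall
    exact ⟨f, hf, fun i => by simpa using h i⟩
  · intro s
    have h := hS (s.map (Function.Embedding.subtype _)) (fun i hi => by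
      obtain ⟨a, -, rfl⟩ := Finset.mem_map.1 hi
      exact a.2)
    rw [Finset.card_map] at h
    refine h.trans (Finset.card_le_card fun j hj => ?_)
    obtain ⟨i, hi, hij⟩ := mem_columnSupport.1 hj
    obtain ⟨a, ha, rfl⟩ := Finset.mem_map.1 hi
    exact Finset.mem_biUnion.2 ⟨a, ha, by simpa using hij⟩

/-- A minimal deficient set of rows is a super essential subsystem. -/
lemma superEssentialSubsystem_of_minimal {n : ℕ} {R : Fin (n + 1) → Fin n → Prop}
    {T : Finset (Fin (n + 1))} (hT : (columnSupport n R T).card < T.card)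
    (hmin : ∀ S ⊂ T, S.card ≤ (columnSupport n R S).card) :
    SuperEssentialSubsystem n R T := by
  have hne : T.Nonempty := Finset.card_pos.1 (by omega)
  have hcard : (columnSupport n R T).card = T.card - 1 := by
    obtain ⟨t, ht⟩ := hne
    have h1 := hmin _ (Finset.erase_ssubset ht)
    have h2 : (columnSupport n R (T.erase t)).card ≤ (columnSupport n R T).card :=
      Finset.card_le_card fun j hj => by
        obtain ⟨i, hi, hij⟩ := mem_columnSupport.1 hj
        exact mem_columnSupport.2 ⟨i, Finset.mem_of_mem_erase hi, hij⟩
    rw [Finset.card_erase_of_mem ht] at h1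
    omega
  refine ⟨hne, hcard, fun t ht => ?_⟩
  obtain ⟨f, hf, hR⟩ := exists_matching (R := R) (S := T.erase t)
    fun U hU => hmin U (lt_of_le_of_lt hU (Finset.erase_ssubset ht))
  let g : {i // i ∈ T.erase t} → {j // j ∈ columnSupport n R T} := fun i =>
    ⟨f i, mem_columnSupport.2 ⟨i.1, Finset.mem_of_mem_erase i.2, hR i⟩⟩
  have hg : Function.Bijective g := by
    refine (Fintype.bijective_iff_injective_and_card g).2
      ⟨fun a b hab => hf (congrArg Subtype.val hab), ?_⟩
    rw [Fintype.card_coe, Fintype.card_coe, hcard, Finset.card_erase_of_mem ht]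
  exact ⟨Equiv.ofBijective g hg, hR⟩

lemma superEssential_of_univ {n : ℕ} {R : Fin (n + 1) → Fin n → Prop}
    (h : SuperEssentialSubsystem n R Finset.univ) : SuperEssential n R := by
  obtain ⟨-, hcard, he⟩ := h
  have hJ : ∀ j, j ∈ Finset.univ.filter fun j : Fin n => ∃ i ∈ Finset.univ, R i j := by
    rw [← Finset.eq_univ_iff_forall, ← Finset.card_eq_iff_eq_univ, hcard]
    simp
  intro t
  obtain ⟨e, hR⟩ := he t (Finset.mem_univ t)
  exact ⟨((Equiv.subtypeEquivRight fun j => by simp).trans e).trans (Equiv.subtypeUnivEquiv hJ),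
    fun j => hR ⟨j.1, by simpa using j.2⟩⟩

/-- If every row of `R` is nonzero then `R` has a super essential subsystem; moreover, if `R`
itself is not super essential, every super essential subsystem of `R` is a proper subset of
the set of rows. -/
theorem exists_superEssentialSubsystem (n : ℕ) (hn : 1 ≤ n)
    (R : Fin (n + 1) → Fin n → Prop) (hrow : ∀ i : Fin (n + 1), ∃ j : Fin n, R i j) :
    (∃ T : Finset (Fin (n + 1)), SuperEssentialSubsystem n R T) ∧
      (¬ SuperEssential n R →
        ∀ T : Finset (Fin (n + 1)), SuperEssentialSubsystem n R T → T ≠ Finset.univ) := by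
  refine ⟨?_, fun hns T hT hu => hns (superEssential_of_univ (hu ▸ hT))⟩
  have huniv : (columnSupport n R Finset.univ).card < (Finset.univ : Finset (Fin (n + 1))).card := by
    have := Finset.card_le_univ (columnSupport n R Finset.univ)
    simp only [Fintype.card_fin, Finset.card_univ] at this ⊢
    omega
  obtain ⟨T, hT, hmin⟩ := WellFounded.has_min
    (wellFounded_lt (α := Finset (Fin (n + 1))))
    {T | (columnSupport n R T).card < T.card} ⟨_, huniv⟩
  exact ⟨T, superEssentialSubsystem_of_minimal hT fun S hS =>
    not_lt.1 fun h => hmin S h hS⟩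
end

section
/- Let T be a super essential subsystem of R, and view the generic matrix X(R) over the fraction field K of MvPolynomial (Fin n × Fin (n−1)) ℚ. Then the submatrix of X(R) consisting of the rows in T has rank |T| − 1, and for every nonempty proper subset T' ⊊ T the submatrix consisting of the rows in T' has rank |T'|. -/
/-!
If rows `i` are matched injectively to columns `f i` inside the pattern `R`, then the square minor
on those rows and columns is nonzero: specializing `x_{i,j}` to `1` when `j = f i` and to `0`
otherwise turns it into the identity matrix. Hence any matched set of rows has full rank
(`rank_rows_of_matching`). A proper subset `T' ⊂ T` misses some `t ∈ T`, and the bijection for `t`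
restricts to a matching of `T'`; for `T` itself, the matched rows `T \ {t}` give the lower bound
`|T| - 1`, while the upper bound holds because all nonzero columns lie in `J`.
-/

open scoped Classical

theorem det_minor_ne_zero_of_matching {n : ℕ} {R : Fin (n + 1) → Fin n → Prop}
    {ι : Type} [Fintype ι] {r : ι → Fin (n + 1)} (hr : Function.Injective r) {f : ι → Fin n}
    (hf : Function.Injective f) (h : ∀ i, R (r i) (f i)) :
    ((genericMatrix n R).submatrix r f).det ≠ 0 := by
  intro h0
  have h1 := congrArg (MvPolynomial.eval
    (fun p : Fin (n + 1) × Fin n => if ∃ i, r i = p.1 ∧ f i = p.2 then (1 : ℚ) else 0)) h0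
  rw [RingHom.map_det, map_zero] at h1
  have h2 : (MvPolynomial.eval
      (fun p : Fin (n + 1) × Fin n => if ∃ i, r i = p.1 ∧ f i = p.2 then (1 : ℚ) else 0)).mapMatrix
        ((genericMatrix n R).submatrix r f) = 1 := by
    ext i j
    by_cases hij : i = j
    · subst hij
      simp [genericMatrix, h i, hr.eq_iff]
    · by_cases hR : R (r i) (f j)
      · simp [genericMatrix, hR, hr.eq_iff, hf.eq_iff, hij]
      · simp [genericMatrix, hR, hij]
  rw [h2, Matrix.det_one] at h1
  exact one_ne_zero h1

theorem rank_rows_of_matching {n : ℕ} {R : Fin (n + 1) → Fin n → Prop} {K : Type} [Field K]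
    {φ : MvPolynomial (Fin (n + 1) × Fin n) ℚ →+* K} (hφ : Function.Injective φ)
    {ι : Type} [Fintype ι] {r : ι → Fin (n + 1)} (hr : Function.Injective r) {f : ι → Fin n}
    (hf : Function.Injective f) (h : ∀ i, R (r i) (f i)) :
    (Matrix.of fun (i : ι) (j : Fin n) => φ (genericMatrix n R (r i) j)).rank =
      Fintype.card ι := by
  apply le_antisymm (Matrix.rank_le_card_height _)
  set M := Matrix.of fun (i : ι) (j : Fin n) => φ (genericMatrix n R (r i) j)
  have hdet : (M.submatrix id f).det ≠ 0 := by
    have : M.submatrix id f = φ.mapMatrix ((genericMatrix n R).submatrix r f) := rfl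
    rw [this, ← RingHom.map_det]
    exact fun h0 => det_minor_ne_zero_of_matching hr hf h ((map_eq_zero_iff φ hφ).1 h0)
  rw [← Matrix.rank_of_isUnit _ ((Matrix.isUnit_iff_isUnit_det _).2 hdet.isUnit)]
  exact Matrix.rank_submatrix_le _ _ _

/-- The rank computation over an arbitrary field extending the polynomial ring. -/
theorem rank_rows_of_injective {n : ℕ} {R : Fin (n + 1) → Fin n → Prop} {K : Type} [Field K]
    {φ : MvPolynomial (Fin (n + 1) × Fin n) ℚ →+* K} (hφ : Function.Injective φ)
    {T : Finset (Fin (n + 1))} (hT : SuperEssentialSubsystem n R T) :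
    (Matrix.of fun (i : {i : Fin (n + 1) // i ∈ T}) (j : Fin n) =>
        φ (genericMatrix n R i.1 j)).rank = T.card - 1 ∧
      ∀ T' : Finset (Fin (n + 1)), T'.Nonempty → T' ⊂ T →
        (Matrix.of fun (i : {i : Fin (n + 1) // i ∈ T'}) (j : Fin n) =>
            φ (genericMatrix n R i.1 j)).rank = T'.card := by
  obtain ⟨⟨t, ht⟩, hJ, hbij⟩ := hT
  refine ⟨le_antisymm ?_ ?_, ?_⟩
  · rw [← hJ]
    rw [← Matrix.rank_transpose]
    apply Matrix.rank_le_card_of_support_subset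
    rw [Function.support_subset_iff']
    intro j hj
    ext i
    have : ¬ R i.1 j := fun hR => hj (by simpa using ⟨i.1, i.2, hR⟩)
    simp [genericMatrix, this]
  · obtain ⟨e, he⟩ := hbij t ht
    have key := rank_rows_of_matching (R := R) hφ Subtype.val_injective
      (Subtype.val_injective.comp e.injective) he
    rw [Fintype.card_coe, Finset.card_erase_of_mem ht] at key
    rw [← key]
    exact Matrix.rank_submatrix_le
      (Matrix.of fun (i : {i // i ∈ T}) (j : Fin n) => φ (genericMatrix n R i.1 j))
      (fun i : {i // i ∈ T.erase t} => (⟨i.1, Finset.mem_of_mem_erase i.2⟩ : {i // i ∈ T})) id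
  · intro T' _ hT'
    obtain ⟨s, hs, hsT'⟩ := Finset.exists_of_ssubset hT'
    obtain ⟨e, he⟩ := hbij s hs
    have hmem : ∀ i ∈ T', i ∈ T.erase s := fun i hi =>
      Finset.mem_erase.2 ⟨fun h => hsT' (h ▸ hi), hT'.1 hi⟩
    have hinj : Function.Injective fun i : {i // i ∈ T'} => (e ⟨i.1, hmem i.1 i.2⟩).1 := by
      intro a b hab
      have hab' := e.injective (Subtype.val_injective hab)
      exact Subtype.ext (congrArg (fun x => x.1) hab')
    have key := rank_rows_of_matching (R := R) hφ (r := fun i : {i // i ∈ T'} => i.1)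
      (f := fun i => (e ⟨i.1, hmem i.1 i.2⟩).1) Subtype.val_injective
      hinj
      (fun i => he ⟨i.1, hmem i.1 i.2⟩)
    rwa [Fintype.card_coe] at key

/-- The submatrix of the generic matrix `X(R)` consisting of the rows of a super essential
subsystem `T`, viewed over the fraction field, has rank `|T| - 1`, while the rows of any
nonempty proper subset `T' ⊊ T` form a matrix of full rank `|T'|`. -/
theorem rank_rows_superEssentialSubsystem (n : ℕ) (hn : 1 ≤ n)
    (R : Fin (n + 1) → Fin n → Prop) (T : Finset (Fin (n + 1)))
    (hT : SuperEssentialSubsystem n R T) :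
    (Matrix.of fun (i : {i : Fin (n + 1) // i ∈ T}) (j : Fin n) =>
        algebraMap (MvPolynomial (Fin (n + 1) × Fin n) ℚ)
          (FractionRing (MvPolynomial (Fin (n + 1) × Fin n) ℚ))
          (genericMatrix n R i.1 j)).rank = T.card - 1 ∧
      ∀ T' : Finset (Fin (n + 1)), T'.Nonempty → T' ⊂ T →
        (Matrix.of fun (i : {i : Fin (n + 1) // i ∈ T'}) (j : Fin n) =>
            algebraMap (MvPolynomial (Fin (n + 1) × Fin n) ℚ)
              (FractionRing (MvPolynomial (Fin (n + 1) × Fin n) ℚ))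
              (genericMatrix n R i.1 j)).rank = T'.card := by
  have hφ := IsFractionRing.injective (MvPolynomial (Fin (n + 1) × Fin n) ℚ)
    (FractionRing (MvPolynomial (Fin (n + 1) × Fin n) ℚ))
  exact rank_rows_of_injective hφ hT
end

section
/- Assume every row of R is nonzero (for every i there exists j with R i j) and every column of R is nonzero (for every j there exists i with R i j). Then R is irredundant — i.e. for every nonempty proper subset T ⊊ Fin n, the number of columns j with R i j for some i ∈ T is at least |T| — if and only if R is super essential. -/
/-! Both directions come from Hall's marriage theorem. A matching of the rows other than `i`
into the columns is automatically a bijection, since both sides have `n` elements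
(`exists_equiv_iff_hall`). Hence super essentiality says that for each `i`, Hall's condition holds
for all sets of rows avoiding `i`; and the sets of rows avoiding some row are exactly the proper
subsets of `Fin (n + 1)`. Hall's condition is vacuous for the empty set. -/

open scoped Classical

/-- Hall's theorem for the rows other than `i`, with Hall's condition phrased for sets of rows of
the full pattern that avoid `i`. -/
theorem exists_equiv_iff_hall {n : ℕ} (R : Fin (n + 1) → Fin n → Prop) (i : Fin (n + 1)) :
    (∃ e : {j : Fin (n + 1) // j ≠ i} ≃ Fin n,
        ∀ j : {j : Fin (n + 1) // j ≠ i}, R j.1 (e j)) ↔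
      ∀ T : Finset (Fin (n + 1)), i ∉ T →
        T.card ≤ (Finset.univ.filter fun j : Fin n => ∃ k ∈ T, R k j).card := by
  have hcard : Fintype.card {j : Fin (n + 1) // j ≠ i} = Fintype.card (Fin n) := by
    simp
  have hall := Fintype.all_card_le_filter_rel_iff_exists_injective
    (fun (j : {j : Fin (n + 1) // j ≠ i}) (c : Fin n) => R j.1 c)
  constructor
  · rintro ⟨e, he⟩ T hT
    have h := hall.2 ⟨e, e.injective, he⟩ (T.subtype (· ≠ i))
    have hne : ∀ k ∈ T, k ≠ i := fun k hk hki => hT (hki ▸ hk)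
    rw [Finset.card_subtype, Finset.filter_true_of_mem hne] at h
    refine h.trans (Finset.card_le_card fun c hc => ?_)
    simp only [Finset.mem_filter, Finset.mem_univ, true_and, Finset.mem_subtype] at hc ⊢
    obtain ⟨k, hk, hR⟩ := hc
    exact ⟨k.1, hk, hR⟩
  · intro h
    obtain ⟨f, hf, hR⟩ := hall.1 fun A => by
      have hA := h (A.map (Function.Embedding.subtype _)) (by simp)
      rw [Finset.card_map] at hA
      refine hA.trans (Finset.card_le_card fun c hc => ?_)
      simp only [Finset.mem_filter, Finset.mem_univ, true_and, Finset.mem_map] at hc ⊢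
      obtain ⟨_, ⟨k, hk, rfl⟩, hkR⟩ := hc
      exact ⟨k, hk, hkR⟩
    exact ⟨Equiv.ofBijective f ((Fintype.bijective_iff_injective_and_card f).2 ⟨hf, hcard⟩), hR⟩

/-- Assume every row and every column of `R` is nonzero. Then `R` is irredundant (every
nonempty proper subset `T` of rows touches at least `|T|` columns) iff `R` is super
essential. -/
theorem irredundant_iff_superEssential (n : ℕ) (hn : 1 ≤ n)
    (R : Fin (n + 1) → Fin n → Prop)
    (hrow : ∀ i : Fin (n + 1), ∃ j : Fin n, R i j)
    (hcol : ∀ j : Fin n, ∃ i : Fin (n + 1), R i j) :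
    (∀ T : Finset (Fin (n + 1)), T.Nonempty → T ≠ Finset.univ →
        T.card ≤ (Finset.univ.filter fun j : Fin n => ∃ i ∈ T, R i j).card) ↔
      SuperEssential n R := by
  constructor
  · intro h i
    refine (exists_equiv_iff_hall R i).2 fun T hT => ?_
    rcases T.eq_empty_or_nonempty with rfl | hne
    · simp
    · exact h T hne fun hu => hT (hu ▸ Finset.mem_univ i)
  · intro h T _ hT
    obtain ⟨i, hi⟩ : ∃ i, i ∉ T := by
      by_contra! hall
      exact hT (Finset.eq_univ_iff_forall.2 hall)
    exact (exists_equiv_iff_hall R i).1 (h i) T hi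
end

section
/- Assume every row and every column of R is nonzero and that R is differentially essential. Then the set T := {i : Fin n | there exists a bijection e from {j : Fin n // j ≠ i} to Fin (n−1) with R j (e j) for all j ≠ i} (equivalently, T = {i | det X_i(R) ≠ 0}) is a super essential subsystem of R, and it is the unique super essential subsystem of R. -/
/-!
Write `N(S)` for the set of columns met by a set `S` of rows. Hall's theorem says that the rows
other than `i` can be matched bijectively with the columns exactly when `|S| ≤ |N(S)|` for all `S`
avoiding `i`. Differential essentiality gives `|S| ≤ |N(S)| + 1` for all `S`. Call `S` *deficient*
if `|N(S)| < |S|`; then a row `i` lies in the set `T` of the theorem if and only if `i` belongs to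
every deficient set. The function `|N(S)| - |S|` is submodular and at least `-1`, so deficient sets
are closed under intersection; the set of all rows is deficient, and hence `T` is the least
deficient set (`deficient_of_mem_iff_matchableWithout`).

Thus `|N(T)| = |T| - 1`, and for `t ∈ T` a matching of all rows but `t` restricts to an injection
`T \ {t} → N(T)`, which is bijective by counting. Conversely a super essential subsystem `T'` is
deficient, so `T ⊆ T'`; a row `t ∈ T' \ T` would make `T` a subset of the matchable set `T' \ {t}`,
contradicting the deficiency of `T`.

The determinant criterion is the Leibniz expansion in one direction; in the other, specializing the
variables along a matching to `1` and all others to `0` yields a permutation matrix.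
-/

open scoped Classical

/-- `R` is differentially essential: for some row `i` there is a bijection `e` from the rows
different from `i` to the columns with `R j (e j)` for every `j ≠ i`. -/
def DiffEssential (n : ℕ) (R : Fin (n + 1) → Fin n → Prop) : Prop :=
  ∃ i : Fin (n + 1), ∃ e : {j : Fin (n + 1) // j ≠ i} ≃ Fin n,
    ∀ j : {j : Fin (n + 1) // j ≠ i}, R j.1 (e j)

/-- The columns `N(S)` meeting a set `S` of rows. -/
noncomputable def nbrCols {n : ℕ} (R : Fin (n + 1) → Fin n → Prop) (S : Finset (Fin (n + 1))) :
    Finset (Fin n) :=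
  Finset.univ.filter fun j : Fin n => ∃ i ∈ S, R i j

/-- The rows other than `i` can be matched bijectively with all the columns. -/
def MatchableWithout {n : ℕ} (R : Fin (n + 1) → Fin n → Prop) (i : Fin (n + 1)) : Prop :=
  ∃ e : {j : Fin (n + 1) // j ≠ i} ≃ Fin n, ∀ j : {j : Fin (n + 1) // j ≠ i}, R j.1 (e j)

theorem mem_nbrCols {n : ℕ} {R : Fin (n + 1) → Fin n → Prop} {S : Finset (Fin (n + 1))}
    {j : Fin n} : j ∈ nbrCols R S ↔ ∃ i ∈ S, R i j := by
  simp [nbrCols]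

theorem nbrCols_mono {n : ℕ} {R : Fin (n + 1) → Fin n → Prop} {S S' : Finset (Fin (n + 1))}
    (h : S ⊆ S') : nbrCols R S ⊆ nbrCols R S' := by
  intro j hj
  obtain ⟨i, hi, hR⟩ := mem_nbrCols.1 hj
  exact mem_nbrCols.2 ⟨i, h hi, hR⟩

/-- The easy half of Hall's theorem. -/
theorem card_le_card_nbrCols {n : ℕ} {R : Fin (n + 1) → Fin n → Prop} {i : Fin (n + 1)}
    (h : MatchableWithout R i) {S : Finset (Fin (n + 1))} (hi : i ∉ S) :
    S.card ≤ (nbrCols R S).card := by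
  obtain ⟨e, he⟩ := h
  have hne : ∀ s ∈ S, s ≠ i := fun s hs h => hi (h ▸ hs)
  have hS : (S.subtype (· ≠ i)).card = S.card := by
    rw [Finset.card_subtype, Finset.filter_true_of_mem hne]
  rw [← hS, ← Finset.card_map e.toEmbedding]
  refine Finset.card_le_card fun j hj => ?_
  obtain ⟨s, hs, rfl⟩ := Finset.mem_map.1 hj
  exact mem_nbrCols.2 ⟨s.1, Finset.mem_subtype.1 hs, he s⟩

/-- Hall's theorem for the rows other than `i`: an injection into the columns is automatically
bijective, since there are `n` rows left. -/
theorem matchableWithout_iff {n : ℕ} {R : Fin (n + 1) → Fin n → Prop} {i : Fin (n + 1)} :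
    MatchableWithout R i ↔
      ∀ S : Finset (Fin (n + 1)), i ∉ S → S.card ≤ (nbrCols R S).card := by
  refine ⟨fun h S hi => card_le_card_nbrCols h hi, fun h => ?_⟩
  obtain ⟨f, hf, hR⟩ := (Fintype.all_card_le_filter_rel_iff_exists_injective
    (fun (j : {j : Fin (n + 1) // j ≠ i}) (c : Fin n) => R j.1 c)).1 (by
      intro A
      have hA := h (A.map (Function.Embedding.subtype _)) (by simp)
      rw [Finset.card_map] at hA
      refine hA.trans (Finset.card_le_card fun c hc => ?_)
      obtain ⟨j, hj, hR⟩ := mem_nbrCols.1 hc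
      obtain ⟨a, ha, rfl⟩ := Finset.mem_map.1 hj
      exact Finset.mem_filter.2 ⟨Finset.mem_univ _, a, ha, hR⟩)
  have hb : Function.Bijective f :=
    (Fintype.bijective_iff_injective_and_card f).2
      ⟨hf, (Fintype.card_congr (finSuccAboveEquiv i)).symm⟩
  exact ⟨Equiv.ofBijective f hb, hR⟩

theorem card_le_card_nbrCols_add_one {n : ℕ} {R : Fin (n + 1) → Fin n → Prop}
    (hde : DiffEssential n R) (S : Finset (Fin (n + 1))) :
    S.card ≤ (nbrCols R S).card + 1 := by
  obtain ⟨i, hi⟩ := hde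
  have h1 := card_le_card_nbrCols hi (Finset.notMem_erase i S)
  have h2 := Finset.card_le_card (nbrCols_mono (R := R) (Finset.erase_subset i S))
  have h3 := Finset.pred_card_le_card_erase (s := S) (a := i)
  omega

/-- Deficient sets are closed under intersection, by submodularity of `|N(S)| - |S|`. -/
theorem deficient_inter {n : ℕ} {R : Fin (n + 1) → Fin n → Prop} (hde : DiffEssential n R)
    {A B : Finset (Fin (n + 1))} (hA : (nbrCols R A).card < A.card)
    (hB : (nbrCols R B).card < B.card) : (nbrCols R (A ∩ B)).card < (A ∩ B).card := by
  have h1 : nbrCols R (A ∪ B) ⊆ nbrCols R A ∪ nbrCols R B := by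
    intro j hj
    obtain ⟨i, hi, hR⟩ := mem_nbrCols.1 hj
    rcases Finset.mem_union.1 hi with hi | hi
    · exact Finset.mem_union_left _ (mem_nbrCols.2 ⟨i, hi, hR⟩)
    · exact Finset.mem_union_right _ (mem_nbrCols.2 ⟨i, hi, hR⟩)
  have h2 : nbrCols R (A ∩ B) ⊆ nbrCols R A ∩ nbrCols R B :=
    Finset.subset_inter (nbrCols_mono Finset.inter_subset_left)
      (nbrCols_mono Finset.inter_subset_right)
  have h3 := Finset.card_le_card h1
  have h4 := Finset.card_le_card h2
  have h5 := Finset.card_union_add_card_inter (nbrCols R A) (nbrCols R B)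
  have h6 := Finset.card_union_add_card_inter A B
  have h7 := card_le_card_nbrCols_add_one hde (A ∪ B)
  omega

/-- The set of rows whose deletion leaves a matchable system is deficient: it is the intersection
of all deficient sets. -/
theorem deficient_of_mem_iff_matchableWithout {n : ℕ} {R : Fin (n + 1) → Fin n → Prop}
    (hde : DiffEssential n R) {T : Finset (Fin (n + 1))}
    (hT : ∀ i, i ∈ T ↔ MatchableWithout R i) : (nbrCols R T).card < T.card := by
  have hinf : ∀ F : Finset (Finset (Fin (n + 1))),
      (∀ S ∈ F, (nbrCols R S).card < S.card) → (nbrCols R (F.inf id)).card < (F.inf id).card := by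
    intro F hF
    refine Finset.inf_induction (p := fun S => (nbrCols R S).card < S.card) ?_
      (fun A hA B hB => deficient_inter hde hA hB) hF
    -- the empty intersection is the set of all rows, and there are only `n` columns
    have := Finset.card_le_univ (nbrCols R (⊤ : Finset (Fin (n + 1))))
    simp only [Finset.top_eq_univ, Finset.card_univ, Fintype.card_fin] at this ⊢
    omega
  have hTF : T = (Finset.univ.filter fun S : Finset (Fin (n + 1)) =>
      (nbrCols R S).card < S.card).inf id := by
    ext i
    rw [hT, matchableWithout_iff, Finset.mem_inf]
    simp only [Finset.mem_filter, Finset.mem_univ, true_and, id]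
    exact forall_congr' fun S => by rw [not_imp_comm, not_le]
  rw [hTF]
  exact hinf _ fun S hS => (Finset.mem_filter.1 hS).2

theorem matchableWithout_iff_det_ne_zero {n : ℕ} {R : Fin (n + 1) → Fin n → Prop}
    {i : Fin (n + 1)} : MatchableWithout R i ↔ (genericMatrixDel n R i).det ≠ 0 := by
  constructor
  · rintro ⟨e, he⟩ h0
    let σ : Equiv.Perm (Fin n) := (finSuccAboveEquiv i).trans e
    have hσ : ∀ k, R (i.succAbove k) (σ k) := fun k => he (finSuccAboveEquiv i k)
    -- specialize the variables on the graph of the matching to `1` and all others to `0`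
    let φ : MvPolynomial (Fin (n + 1) × Fin n) ℚ →+* ℚ := MvPolynomial.eval fun p =>
      if ∃ k, p = (i.succAbove k, σ k) then 1 else 0
    have hφ : φ.mapMatrix (genericMatrixDel n R i) = σ.permMatrix ℚ := by
      ext k c
      have hk : (∃ l, (i.succAbove k, c) = (i.succAbove l, σ l)) ↔ σ k = c := by
        constructor
        · rintro ⟨l, hl⟩
          obtain ⟨h1, h2⟩ := Prod.mk.inj hl
          rw [Fin.succAbove_right_injective h1, h2]
        · rintro rfl
          exact ⟨k, rfl⟩
      rw [Equiv.Perm.permMatrix, PEquiv.toMatrix_apply, RingHom.mapMatrix_apply, Matrix.map_apply]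
      simp only [genericMatrixDel, genericMatrix, Matrix.submatrix_apply, Matrix.of_apply, id,
        Equiv.toPEquiv_apply, Option.mem_def, Option.some.injEq]
      by_cases hc : σ k = c
      · subst hc
        rw [if_pos (hσ k), if_pos rfl, MvPolynomial.eval_X, if_pos ⟨k, rfl⟩]
      · rw [if_neg hc]
        split_ifs
        · rw [MvPolynomial.eval_X, if_neg (mt hk.1 hc)]
        · exact map_zero φ
    have hdet := congrArg φ h0
    rw [RingHom.map_det, hφ, Matrix.det_permutation, map_zero] at hdet
    exact (Int.cast_ne_zero.2 (Units.ne_zero σ.sign)) hdet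
  · intro h
    rw [← Matrix.det_transpose, Matrix.det_apply] at h
    obtain ⟨σ, -, hσ⟩ := Finset.exists_ne_zero_of_sum_ne_zero h
    have hR : ∀ k, R (i.succAbove k) (σ k) := by
      intro k
      by_contra hk
      refine hσ ?_
      rw [Finset.prod_eq_zero (Finset.mem_univ k), smul_zero]
      simp [genericMatrixDel, genericMatrix, hk]
    refine ⟨(finSuccAboveEquiv i).symm.trans σ, fun j => ?_⟩
    obtain ⟨k, rfl⟩ := (finSuccAboveEquiv i).surjective j
    rw [Equiv.trans_apply, Equiv.symm_apply_apply]
    exact hR k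

/-- If `T` is the set of rows whose deletion leaves a matchable system, then the matchings of the
whole system restrict to the ones required of a super essential subsystem. -/
theorem superEssentialSubsystem_of_mem_iff {n : ℕ} {R : Fin (n + 1) → Fin n → Prop}
    (hde : DiffEssential n R) {T : Finset (Fin (n + 1))}
    (hT : ∀ i, i ∈ T ↔ MatchableWithout R i) : SuperEssentialSubsystem n R T := by
  have h1 := deficient_of_mem_iff_matchableWithout hde hT
  have h2 := card_le_card_nbrCols_add_one hde T
  have hcard : (nbrCols R T).card = T.card - 1 := by omega
  refine ⟨Finset.card_pos.1 (by omega), hcard, fun t ht => ?_⟩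
  obtain ⟨e, he⟩ := (hT t).1 ht
  let f : {i // i ∈ T.erase t} → {j // j ∈ nbrCols R T} := fun i =>
    ⟨e ⟨i.1, Finset.ne_of_mem_erase i.2⟩,
      mem_nbrCols.2 ⟨i.1, Finset.mem_of_mem_erase i.2, he ⟨i.1, _⟩⟩⟩
  have hf : Function.Injective f := by
    intro a b hab
    have := e.injective (Subtype.ext_iff.1 hab)
    exact Subtype.ext (Subtype.mk.inj this)
  have hb : Function.Bijective f :=
    (Fintype.bijective_iff_injective_and_card f).2 ⟨hf, by
      rw [Fintype.card_coe, Fintype.card_coe, Finset.card_erase_of_mem ht, hcard]⟩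
  exact ⟨Equiv.ofBijective f hb, fun i => he ⟨i.1, _⟩⟩

theorem eq_of_superEssentialSubsystem {n : ℕ} {R : Fin (n + 1) → Fin n → Prop}
    (hde : DiffEssential n R) {T T' : Finset (Fin (n + 1))}
    (hT : ∀ i, i ∈ T ↔ MatchableWithout R i) (h : SuperEssentialSubsystem n R T') : T' = T := by
  obtain ⟨hne, hcard, hmatch⟩ := h
  change (nbrCols R T').card = T'.card - 1 at hcard
  have hpos := Finset.card_pos.2 hne
  have hsub : T ⊆ T' := by
    intro i hi
    by_contra hi'
    have := card_le_card_nbrCols ((hT i).1 hi) hi'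
    omega
  refine Finset.Subset.antisymm (fun t ht => ?_) hsub
  by_contra htT
  obtain ⟨e, he⟩ := hmatch t ht
  have hmem : ∀ i ∈ T, i ∈ T'.erase t := fun i hi =>
    Finset.mem_erase.2 ⟨fun h => htT (h ▸ hi), hsub hi⟩
  have hle : T.card ≤ (nbrCols R T).card := by
    rw [← Finset.card_attach (s := T)]
    refine Finset.card_le_card_of_injOn (fun i => (e ⟨i.1, hmem i.1 i.2⟩).1) ?_ ?_
    · intro i _
      exact mem_nbrCols.2 ⟨i.1, i.2, he ⟨i.1, hmem i.1 i.2⟩⟩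
    · intro a _ b _ hab
      have := e.injective (Subtype.ext hab)
      exact Subtype.ext (Subtype.mk.inj this)
  exact absurd (deficient_of_mem_iff_matchableWithout hde hT) (not_lt.2 hle)

/-- For a differentially essential `R` with all rows and columns nonzero, the set
`T = {i | there is a bijection e : {j ≠ i} ≃ columns with R j (e j)}`, equivalently
`T = {i | det X_i(R) ≠ 0}`, is the unique super essential subsystem of `R`. -/
theorem superEssentialSubsystem_of_diffEssential (n : ℕ) (hn : 1 ≤ n)
    (R : Fin (n + 1) → Fin n → Prop)
    (hrow : ∀ i : Fin (n + 1), ∃ j : Fin n, R i j)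
    (hcol : ∀ j : Fin n, ∃ i : Fin (n + 1), R i j)
    (hde : DiffEssential n R) :
    (Finset.univ.filter fun i : Fin (n + 1) =>
        ∃ e : {j : Fin (n + 1) // j ≠ i} ≃ Fin n,
          ∀ j : {j : Fin (n + 1) // j ≠ i}, R j.1 (e j)) =
        (Finset.univ.filter fun i : Fin (n + 1) => (genericMatrixDel n R i).det ≠ 0) ∧
      SuperEssentialSubsystem n R
        (Finset.univ.filter fun i : Fin (n + 1) =>
          ∃ e : {j : Fin (n + 1) // j ≠ i} ≃ Fin n,
            ∀ j : {j : Fin (n + 1) // j ≠ i}, R j.1 (e j)) ∧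
      ∀ T' : Finset (Fin (n + 1)), SuperEssentialSubsystem n R T' →
        T' = (Finset.univ.filter fun i : Fin (n + 1) =>
          ∃ e : {j : Fin (n + 1) // j ≠ i} ≃ Fin n,
            ∀ j : {j : Fin (n + 1) // j ≠ i}, R j.1 (e j)) := by
  refine ⟨Finset.filter_congr fun i _ => matchableWithout_iff_det_ne_zero,
    superEssentialSubsystem_of_mem_iff hde fun i => ?_,
    fun T' hT' => eq_of_superEssentialSubsystem hde (fun i => ?_) hT'⟩
  all_goals exact Finset.mem_filter.trans (and_iff_right (Finset.mem_univ i))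
end

section
/- If the system is super essential, then for every i : Fin n one has o i + γ ≤ N; that is, N − o i − γ(P) ≥ 0 for every i, so the sets of derivatives ∂^k f_i with 0 ≤ k ≤ N − o i − γ are nonempty and the formula ∂FRes(P) can be defined. -/
/-!
For fixed `i`, super essentiality gives a perfect matching `e` between the rows `k ≠ i` and the
columns, with `S k (e k)` nonempty. A nonempty support `S k j` forces `γ_j ≤ o k`
(`gammaJ_le_sysOrd`), so summing `γ_{e k} ≤ o k` over the rows `k ≠ i` gives `γ ≤ N − o i`.
-/

open scoped Classical

/-- The order `o i` of the `i`-th polynomial: the maximum over the `j` with nonempty support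
`S i j` of the maximum element of `S i j`. -/
noncomputable def sysOrd (n : ℕ) (S : Fin (n + 1) → Fin n → Finset ℕ) (i : Fin (n + 1)) : ℕ :=
  (Finset.univ.filter fun j : Fin n => S i j ≠ ∅).sup fun j => (S i j).sup id

/-- `N`, the sum of the orders of the polynomials. -/
noncomputable def sysN (n : ℕ) (S : Fin (n + 1) → Fin n → Finset ℕ) : ℕ :=
  ∑ i, sysOrd n S i

/-- `γ̲_j`, the minimum of `min (S i j)` over those `i` with `S i j ≠ ∅`. -/
noncomputable def gammaLow (n : ℕ) (S : Fin (n + 1) → Fin n → Finset ℕ) (j : Fin n) : ℕ :=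
  sInf {m : ℕ | ∃ i : Fin (n + 1), S i j ≠ ∅ ∧ m = sInf (↑(S i j) : Set ℕ)}

/-- `γ̄_j`, the minimum of `o i − max (S i j)` over those `i` with `S i j ≠ ∅`. -/
noncomputable def gammaHigh (n : ℕ) (S : Fin (n + 1) → Fin n → Finset ℕ) (j : Fin n) : ℕ :=
  sInf {m : ℕ | ∃ i : Fin (n + 1), S i j ≠ ∅ ∧ m = sysOrd n S i - (S i j).sup id}

/-- `γ_j := γ̲_j + γ̄_j`. -/
noncomputable def gammaJ (n : ℕ) (S : Fin (n + 1) → Fin n → Finset ℕ) (j : Fin n) : ℕ :=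
  gammaLow n S j + gammaHigh n S j

/-- `γ := Σ_j γ_j`. -/
noncomputable def gammaTot (n : ℕ) (S : Fin (n + 1) → Fin n → Finset ℕ) : ℕ :=
  ∑ j, gammaJ n S j

/-- The system is super essential: for every `i` there is a bijection `e` from the rows `j ≠ i`
to the columns with `S j (e j) ≠ ∅` for all `j ≠ i`. -/
def SuperEssentialSupp (n : ℕ) (S : Fin (n + 1) → Fin n → Finset ℕ) : Prop :=
  ∀ i : Fin (n + 1), ∃ e : {j : Fin (n + 1) // j ≠ i} ≃ Fin n,
    ∀ j : {j : Fin (n + 1) // j ≠ i}, S j.1 (e j) ≠ ∅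

/-- A nonempty support `S i j` forces `γ_j ≤ o i`, because `γ̲_j ≤ min (S i j) ≤ max (S i j)`
and `γ̄_j ≤ o i − max (S i j)`. -/
lemma gammaJ_le_sysOrd (n : ℕ) (S : Fin (n + 1) → Fin n → Finset ℕ)
    (i : Fin (n + 1)) (j : Fin n) (h : S i j ≠ ∅) : gammaJ n S j ≤ sysOrd n S i := by
  have h1 : gammaLow n S j ≤ sInf (↑(S i j) : Set ℕ) := Nat.sInf_le ⟨i, h, rfl⟩
  have h2 : gammaHigh n S j ≤ sysOrd n S i - (S i j).sup id := Nat.sInf_le ⟨i, h, rfl⟩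
  have h3 : sInf (↑(S i j) : Set ℕ) ≤ (S i j).sup id := by
    obtain ⟨x, hx⟩ := Finset.nonempty_iff_ne_empty.mpr h
    exact (Nat.sInf_le (Finset.mem_coe.mpr hx)).trans (Finset.le_sup (f := id) hx)
  -- This makes the truncated subtraction in `h2` a true one.
  have h4 : (S i j).sup id ≤ sysOrd n S i :=
    Finset.le_sup (s := Finset.univ.filter fun j : Fin n => S i j ≠ ∅)
      (f := fun j => (S i j).sup id) (by simpa using h)
  unfold gammaJ
  omega

/-- If the system is super essential then `o i + γ ≤ N` for every `i`, i.e.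
`N − o i − γ ≥ 0`, so the formula `∂FRes(P)` can be defined. -/
theorem ord_add_gammaTot_le_sysN (n : ℕ) (hn : 1 ≤ n)
    (S : Fin (n + 1) → Fin n → Finset ℕ)
    (hrow : ∀ i : Fin (n + 1), ∃ j : Fin n, S i j ≠ ∅)
    (hcol : ∀ j : Fin n, ∃ i : Fin (n + 1), S i j ≠ ∅)
    (hse : SuperEssentialSupp n S) :
    ∀ i : Fin (n + 1), sysOrd n S i + gammaTot n S ≤ sysN n S := by
  intro i
  obtain ⟨e, he⟩ := hse i
  -- Reindex the columns by the rows `k ≠ i` along the matching `e`.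
  have hγ : gammaTot n S ≤ ∑ k : {k : Fin (n + 1) // k ≠ i}, sysOrd n S k.1 := by
    unfold gammaTot
    rw [← Equiv.sum_comp e]
    exact Finset.sum_le_sum fun k _ => gammaJ_le_sysOrd n S k.1 (e k) (he k)
  have hN : sysN n S = sysOrd n S i + ∑ k : {k : Fin (n + 1) // k ≠ i}, sysOrd n S k.1 :=
    Fintype.sum_eq_add_sum_subtype_ne (sysOrd n S) i
  omega
end

section
/- Let k' ≤ K be natural numbers such that c k' ≠ 0 and c t = 0 for every t with k' < t ≤ K. Then for every m ≤ K − k', the m-fold derivative satisfies (δ^[m] c) (k' + m) = c k' (in particular it is nonzero), and (δ^[m] c) t = 0 for every t with k' + m < t ≤ K. -/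
/-! Each application of `δ` shifts coefficients up by one index and adds the derivative of the
coefficient already there. Just above the leading index, and up to `K`, the coefficients vanish,
hence so do their derivatives; the leading coefficient is therefore carried up unchanged, and the
gap above it persists up to `K`. The theorem follows by induction on `m`. -/

/-- Let `k' ≤ K` with `c k' ≠ 0` and `c t = 0` for `k' < t ≤ K`. Then for every `m ≤ K − k'`,
the `m`-fold derivative satisfies `(δ^[m] c) (k' + m) = c k'` (in particular it is nonzero)
and `(δ^[m] c) t = 0` for every `t` with `k' + m < t ≤ K`. Here `δ` is any map satisfying
`(δ c) 0 = d (c 0)` and `(δ c) (k+1) = d (c (k+1)) + c k`. -/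
theorem iterate_deriv_coeff {D : Type*} [CommRing D] (d : Derivation ℤ D D)
    (δ : (ℕ →₀ D) → (ℕ →₀ D))
    (hδ0 : ∀ c : ℕ →₀ D, δ c 0 = d (c 0))
    (hδs : ∀ (c : ℕ →₀ D) (k : ℕ), δ c (k + 1) = d (c (k + 1)) + c k)
    (c : ℕ →₀ D) (k' K : ℕ) (hk'K : k' ≤ K) (h1 : c k' ≠ 0)
    (h2 : ∀ t : ℕ, k' < t → t ≤ K → c t = 0) :
    ∀ m : ℕ, m ≤ K - k' →
      (δ^[m] c) (k' + m) = c k' ∧ (δ^[m] c) (k' + m) ≠ 0 ∧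
        ∀ t : ℕ, k' + m < t → t ≤ K → (δ^[m] c) t = 0 := by
  intro m hm
  suffices h : (δ^[m] c) (k' + m) = c k' ∧
      ∀ t : ℕ, k' + m < t → t ≤ K → (δ^[m] c) t = 0 from
    ⟨h.1, h.1 ▸ h1, h.2⟩
  induction m with
  | zero => exact ⟨rfl, h2⟩
  | succ m ih =>
    obtain ⟨hlead, hvanish⟩ := ih (by omega)
    rw [Function.iterate_succ_apply']
    constructor
    -- The index `k' + m + 1 ≤ K` lies where the previous iterate vanishes, so only the shift survives.
    · rw [← Nat.add_assoc, hδs, hvanish (k' + m + 1) (by omega) (by omega), map_zero, zero_add,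
        hlead]
    · intro t ht htK
      obtain ⟨s, rfl⟩ : ∃ s, t = s + 1 := ⟨t - 1, by omega⟩
      rw [hδs, hvanish (s + 1) (by omega) htK, hvanish s (by omega) (by omega), map_zero,
        add_zero]
end

section
/- Assume the system is super essential. Then for every j : Fin (n−1) and every k : ℕ, the following are equivalent: (a) γ̲_j ≤ k and k + γ̄_j + γ ≤ N; (b) there exist i : Fin n and m : ℕ with m + o i + γ ≤ N such that (δ^[m] (c i)) (j, k) ≠ 0. Equivalently, the coefficient matrix M(P), whose rows are the coefficient vectors of the derivatives δ^m f_i for 0 ≤ m ≤ N − o i − γ and whose columns are indexed by the variables u_{j,k} with γ̲_j ≤ k ≤ N − γ̄_j − γ, has no zero column, and no derivative δ^m f_i involves a variable outside this set. -/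
/-!
Write `o i` for the order of row `i`, `N' = N - γ` and `M i = N' - o i`, the number of times row `i`
may be differentiated.

The derivatives of row `i` of order at most `M i` involve, in column `j`, exactly the positions in
the union of the intervals `[s, s + M i]`, where `s` runs over the support entries of row `i` in
column `j`. No other position occurs (`exists_coeff_of_iterate`), and every position `k` of such an
interval is reached by differentiating `k - s'` times, where `s'` is the largest support entry
not exceeding `k`: all contributions other than that of `s'` vanish (`exists_iterate_ne_zero`).
Since `γ̲_j ≤ s` and `s + γ̄_j ≤ o i`, only variables in the asserted range occur.

Conversely, it remains to see that the intervals `[s, s + M i]` leave no gap in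
`[γ̲_j, N' - γ̄_j]`. Deleting a row `i`, the matching provided by super essentiality pairs column
`j` with some row `p` and gives `o p - γ_j ≤ M i` (`exists_partner`). Suppose `k` is not covered.
A row with an entry `≤ k` in column `j` has `M < k - γ̲_j`, so its partner has all its entries
below `k` and satisfies the same bound; such a row exists because `γ̲_j` is attained, and this
forces `N' - γ_j ≤ 2 (k - γ̲_j - 1)`. The row attaining `γ̄_j` has an entry `> k`, since otherwise
it would cover `k`; its partner also has an entry `> k`, and this forces
`N' ≥ 2 k + 2 + γ̄_j - γ̲_j`, a contradiction (`exists_cover`).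
-/

open scoped Classical

/-- The support `S i j = {k | c i (j, k) ≠ 0}` of the differential operator `L_{i,j}`. -/
noncomputable def supp {D : Type*} [CommRing D] (n : ℕ)
    (c : Fin (n + 1) → ((Fin n × ℕ) →₀ D)) (i : Fin (n + 1)) (j : Fin n) : Finset ℕ :=
  ((c i).support.filter fun p => p.1 = j).image Prod.snd

theorem mem_supp {D : Type*} [CommRing D] (n : ℕ)
    (c : Fin (n + 1) → ((Fin n × ℕ) →₀ D)) (i : Fin (n + 1)) (j : Fin n) (k : ℕ) :
    k ∈ supp n c i j ↔ c i (j, k) ≠ 0 := by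
  simp [supp]

theorem le_sysOrd (n : ℕ) (S : Fin (n + 1) → Fin n → Finset ℕ) {i : Fin (n + 1)} {j : Fin n}
    (h : S i j ≠ ∅) : (S i j).sup id ≤ sysOrd n S i :=
  Finset.le_sup (f := fun j => (S i j).sup id)
    (Finset.mem_filter.2 ⟨Finset.mem_univ j, h⟩)

theorem gammaLow_le (n : ℕ) (S : Fin (n + 1) → Fin n → Finset ℕ) {i : Fin (n + 1)} {j : Fin n}
    {s : ℕ} (h : s ∈ S i j) : gammaLow n S j ≤ s := by
  have h1 : gammaLow n S j ≤ sInf (↑(S i j) : Set ℕ) :=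
    Nat.sInf_le ⟨i, Finset.ne_empty_of_mem h, rfl⟩
  exact h1.trans (Nat.sInf_le (Finset.mem_coe.2 h))

theorem add_gammaHigh_le (n : ℕ) (S : Fin (n + 1) → Fin n → Finset ℕ) {i : Fin (n + 1)}
    {j : Fin n} {s : ℕ} (h : s ∈ S i j) : s + gammaHigh n S j ≤ sysOrd n S i := by
  have hne := Finset.ne_empty_of_mem h
  have h1 : gammaHigh n S j ≤ sysOrd n S i - (S i j).sup id := Nat.sInf_le ⟨i, hne, rfl⟩
  have h2 := le_sysOrd n S hne
  have h3 : s ≤ (S i j).sup id := Finset.le_sup (f := id) h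
  omega

theorem gammaJ_le (n : ℕ) (S : Fin (n + 1) → Fin n → Finset ℕ) {i : Fin (n + 1)} {j : Fin n}
    (h : S i j ≠ ∅) : gammaJ n S j ≤ sysOrd n S i := by
  obtain ⟨s, hs⟩ := Finset.nonempty_iff_ne_empty.2 h
  have h1 := gammaLow_le n S hs
  have h2 := add_gammaHigh_le n S hs
  unfold gammaJ
  omega

theorem exists_gammaLow (n : ℕ) (S : Fin (n + 1) → Fin n → Finset ℕ) {j : Fin n}
    (h : ∃ i, S i j ≠ ∅) : ∃ i, gammaLow n S j ∈ S i j := by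
  obtain ⟨i, hi⟩ := h
  obtain ⟨i', hne, he⟩ := Nat.sInf_mem (s := {m : ℕ | ∃ i : Fin (n + 1), S i j ≠ ∅ ∧
    m = sInf (↑(S i j) : Set ℕ)}) ⟨_, i, hi, rfl⟩
  refine ⟨i', ?_⟩
  have : gammaLow n S j = sInf (↑(S i' j) : Set ℕ) := he
  rw [this]
  exact Finset.mem_coe.1 (Nat.sInf_mem
    (Finset.coe_nonempty.2 (Finset.nonempty_iff_ne_empty.2 hne)))

theorem exists_gammaHigh (n : ℕ) (S : Fin (n + 1) → Fin n → Finset ℕ) {j : Fin n}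
    (h : ∃ i, S i j ≠ ∅) : ∃ i, ∃ s ∈ S i j, s + gammaHigh n S j = sysOrd n S i := by
  obtain ⟨i, hi⟩ := h
  obtain ⟨i', hne, he⟩ := Nat.sInf_mem (s := {m : ℕ | ∃ i : Fin (n + 1), S i j ≠ ∅ ∧
    m = sysOrd n S i - (S i j).sup id}) ⟨_, i, hi, rfl⟩
  have he' : gammaHigh n S j = sysOrd n S i' - (S i' j).sup id := he
  obtain ⟨s, hs, hmax⟩ := Finset.exists_mem_eq_sup (S i' j)
    (Finset.nonempty_iff_ne_empty.2 hne) id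
  have hle := le_sysOrd n S hne
  refine ⟨i', s, hs, ?_⟩
  simp only [id] at hmax
  omega

/-- After deletion of row `i`, the row `p` matched with column `j` satisfies
`o p - γ_j ≤ N - γ - o i`: every other matched pair contributes `o q - γ_{e q} ≥ 0`. -/
theorem exists_partner (n : ℕ) (S : Fin (n + 1) → Fin n → Finset ℕ)
    (hse : SuperEssentialSupp n S) (i : Fin (n + 1)) (j : Fin n) :
    ∃ p, S p j ≠ ∅ ∧
      sysOrd n S i + sysOrd n S p + gammaTot n S ≤ sysN n S + gammaJ n S j := by
  obtain ⟨e, he⟩ := hse i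
  refine ⟨(e.symm j).1, by simpa using he (e.symm j), ?_⟩
  have hN : sysN n S = sysOrd n S i + ∑ j', sysOrd n S (e.symm j').1 := by
    rw [Equiv.sum_comp e.symm (fun q => sysOrd n S q.1), sysN,
      ← Finset.add_sum_erase _ _ (Finset.mem_univ i)]
    congr 1
    exact Finset.sum_subtype _ (by simp) _
  have hG : gammaTot n S = gammaJ n S j + ∑ j' ∈ Finset.univ.erase j, gammaJ n S j' :=
    (Finset.add_sum_erase _ _ (Finset.mem_univ j)).symm
  have hle : ∑ j' ∈ Finset.univ.erase j, gammaJ n S j' ≤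
      ∑ j' ∈ Finset.univ.erase j, sysOrd n S (e.symm j').1 :=
    Finset.sum_le_sum fun j' _ => gammaJ_le n S (by simpa using he (e.symm j'))
  rw [← Finset.add_sum_erase _ _ (Finset.mem_univ j)] at hN
  omega

/-- The intervals `[s, s + (N - γ - o i)]` with `s ∈ S i j` cover `[γ̲_j, N - γ - γ̄_j]`. -/
theorem exists_cover (n : ℕ) (S : Fin (n + 1) → Fin n → Finset ℕ)
    (hcol : ∀ j : Fin n, ∃ i : Fin (n + 1), S i j ≠ ∅)
    (hse : SuperEssentialSupp n S) (j : Fin n) (k : ℕ) (hk : gammaLow n S j ≤ k)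
    (hk' : k + gammaHigh n S j + gammaTot n S ≤ sysN n S) :
    ∃ i, ∃ s ∈ S i j, s ≤ k ∧ (k - s) + sysOrd n S i + gammaTot n S ≤ sysN n S := by
  by_contra! H
  have hJ : gammaJ n S j = gammaLow n S j + gammaHigh n S j := rfl
  -- As `k` is not covered, rows with an entry `≤ k` can be differentiated fewer than `k - γ̲_j` times.
  have hA : ∀ i, ∀ s ∈ S i j, s ≤ k →
      sysN n S < (k - gammaLow n S j) + sysOrd n S i + gammaTot n S := by
    intro i s hs hsk
    have h1 := H i s hs hsk
    have h2 := gammaLow_le n S hs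
    omega
  obtain ⟨i₀, h₀⟩ := exists_gammaLow n S (hcol j)
  have hA₀ := hA i₀ _ h₀ hk
  obtain ⟨p, hp, hpN⟩ := exists_partner n S hse i₀ j
  obtain ⟨t, ht⟩ := Finset.nonempty_iff_ne_empty.2 hp
  have htp := add_gammaHigh_le n S ht
  have hAp := hA p t ht (by omega)
  obtain ⟨i₁, s₁, hs₁, he₁⟩ := exists_gammaHigh n S (hcol j)
  have hs₁k : k < s₁ := by
    by_contra! hle
    have := H i₁ s₁ hs₁ hle
    omega
  obtain ⟨q, hq, hqN⟩ := exists_partner n S hse i₁ j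
  obtain ⟨r, hr⟩ := Finset.nonempty_iff_ne_empty.2 hq
  have hrq := add_gammaHigh_le n S hr
  rcases le_or_gt r k with hrk | hrk
  -- With an entry `r ≤ k`, `hqN` gives `o i₁ < k + γ̄_j`, whereas `o i₁ = s₁ + γ̄_j > k + γ̄_j`.
  · have := hA q r hr hrk
    omega
  · omega

/-- A nonzero coefficient at `(j, s)` makes every position `(j, k)` with `k ≥ s` appear in some
derivative of order at most `k - s`. -/
theorem exists_iterate_ne_zero {D ι : Type*} [CommRing D] (d : Derivation ℤ D D)
    (δ : ((ι × ℕ) →₀ D) → ((ι × ℕ) →₀ D))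
    (hδs : ∀ (f : (ι × ℕ) →₀ D) (j : ι) (k : ℕ),
      δ f (j, k + 1) = d (f (j, k + 1)) + f (j, k))
    (f : (ι × ℕ) →₀ D) (j : ι) (s k : ℕ) (hsk : s ≤ k) (hs : f (j, s) ≠ 0) :
    ∃ m ≤ k - s, (δ^[m] f) (j, k) ≠ 0 := by
  -- `s'` is the largest support element not exceeding `k`.
  set s' := Nat.findGreatest (fun t => f (j, t) ≠ 0) k with hs'
  have h1 : f (j, s') ≠ 0 := Nat.findGreatest_spec (P := fun t => f (j, t) ≠ 0) hsk hs
  have h2 : s ≤ s' := Nat.le_findGreatest hsk hs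
  have h3 : s' ≤ k := Nat.findGreatest_le k
  have h4 : ∀ t, s' < t → t ≤ k → f (j, t) = 0 := fun t ht htk => by
    simpa using Nat.findGreatest_is_greatest (P := fun t => f (j, t) ≠ 0) ht htk
  have key : ∀ m, s' + m ≤ k → (δ^[m] f) (j, s' + m) = f (j, s') ∧
      ∀ t, s' + m < t → t ≤ k → (δ^[m] f) (j, t) = 0 := by
    intro m
    induction m with
    | zero => exact fun _ => ⟨rfl, h4⟩
    | succ m ih =>
      intro hm
      obtain ⟨ih1, ih2⟩ := ih (by omega)
      simp only [Function.iterate_succ_apply']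
      constructor
      · rw [← add_assoc, hδs, ih1, ih2 _ (by omega) (by omega), map_zero, zero_add]
      · rintro (_ | t) ht htk
        · omega
        · rw [hδs, ih2 _ (by omega) htk, ih2 _ (by omega) (by omega), map_zero, zero_add]
  refine ⟨k - s', by omega, ?_⟩
  have := (key (k - s') (by omega)).1
  rw [Nat.add_sub_cancel' h3] at this
  rwa [this]

theorem exists_coeff_of_iterate {D ι : Type*} [CommRing D] (d : Derivation ℤ D D)
    (δ : ((ι × ℕ) →₀ D) → ((ι × ℕ) →₀ D))
    (hδ0 : ∀ (f : (ι × ℕ) →₀ D) (j : ι), δ f (j, 0) = d (f (j, 0)))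
    (hδs : ∀ (f : (ι × ℕ) →₀ D) (j : ι) (k : ℕ),
      δ f (j, k + 1) = d (f (j, k + 1)) + f (j, k))
    (f : (ι × ℕ) →₀ D) (j : ι) (m k : ℕ) (h : (δ^[m] f) (j, k) ≠ 0) :
    ∃ s, f (j, s) ≠ 0 ∧ s ≤ k ∧ k ≤ s + m := by
  induction m generalizing k with
  | zero => exact ⟨k, h, le_rfl, le_rfl⟩
  | succ m ih =>
    rw [Function.iterate_succ_apply'] at h
    by_cases hk : (δ^[m] f) (j, k) = 0
    · cases k with
      | zero => simp [hδ0, hk] at h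
      | succ k =>
        rw [hδs, hk, map_zero, zero_add] at h
        obtain ⟨s, hs, h1, h2⟩ := ih k h
        exact ⟨s, hs, by omega, by omega⟩
    · obtain ⟨s, hs, h1, h2⟩ := ih k hk
      exact ⟨s, hs, h1, by omega⟩

/-- For a super essential system, the coefficient matrix `M(P)` of the derivatives
`δ^[m] (c i)` for `m + o i + γ ≤ N` in the variables `u_{j,k}`, `γ̲_j ≤ k ≤ N − γ̄_j − γ`,
has no zero column, and no such derivative involves a variable outside this range: a pair
`(j, k)` satisfies `γ̲_j ≤ k` and `k + γ̄_j + γ ≤ N` iff some admissible derivative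
`δ^[m] (c i)` has a nonzero coefficient at `(j, k)`. Here `δ` is any map satisfying
`(δ f) (j, 0) = d (f (j, 0))` and `(δ f) (j, k+1) = d (f (j, k+1)) + f (j, k)`. -/
theorem matrix_no_zero_columns {D : Type*} [CommRing D] [IsDomain D]
    (d : Derivation ℤ D D) (n : ℕ) (hn : 1 ≤ n)
    (c : Fin (n + 1) → ((Fin n × ℕ) →₀ D))
    (δ : ((Fin n × ℕ) →₀ D) → ((Fin n × ℕ) →₀ D))
    (hδ0 : ∀ (f : (Fin n × ℕ) →₀ D) (j : Fin n), δ f (j, 0) = d (f (j, 0)))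
    (hδs : ∀ (f : (Fin n × ℕ) →₀ D) (j : Fin n) (k : ℕ),
      δ f (j, k + 1) = d (f (j, k + 1)) + f (j, k))
    (hrow : ∀ i : Fin (n + 1), ∃ j : Fin n, supp n c i j ≠ ∅)
    (hcol : ∀ j : Fin n, ∃ i : Fin (n + 1), supp n c i j ≠ ∅)
    (hse : SuperEssentialSupp n (supp n c)) :
    ∀ (j : Fin n) (k : ℕ),
      (gammaLow n (supp n c) j ≤ k ∧
          k + gammaHigh n (supp n c) j + gammaTot n (supp n c) ≤ sysN n (supp n c)) ↔
        ∃ (i : Fin (n + 1)) (m : ℕ),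
          m + sysOrd n (supp n c) i + gammaTot n (supp n c) ≤ sysN n (supp n c) ∧
            (δ^[m] (c i)) (j, k) ≠ 0 := by
  intro j k
  constructor
  · rintro ⟨hk, hk'⟩
    obtain ⟨i, s, hs, hsk, hN⟩ := exists_cover n (supp n c) hcol hse j k hk hk'
    obtain ⟨m, hm, hne⟩ :=
      exists_iterate_ne_zero d δ hδs (c i) j s k hsk ((mem_supp n c i j s).1 hs)
    exact ⟨i, m, by omega, hne⟩
  · rintro ⟨i, m, hN, hne⟩
    obtain ⟨s, hs, h1, h2⟩ := exists_coeff_of_iterate d δ hδ0 hδs (c i) j m k hne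
    have hs' := (mem_supp n c i j s).2 hs
    have h3 := gammaLow_le n (supp n c) hs'
    have h4 := add_gammaHigh_le n (supp n c) hs'
    exact ⟨by omega, by omega⟩
end
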